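/- Let 𝔸 be a finite relational structure and k ∈ ℕ. Assume that 𝔸 has pathwidth duality k−1 and let s ∈ ℕ be such that 𝒫_{𝔸^(k)}^s(I) ⊢ G for each unsatisfiable path instance I of CSP(𝔸^(k)). Then 𝒫_𝔸^{k(s+2)} decides CSP(𝔸), i.e., for every instance I of CSP(𝔸), 𝒫_𝔸^{k(s+2)}(I) ⊢ G if and only if I is unsatisfiable. -/

import Mathlib

namespace CSPPaper

/-- A relational structure on `A`: a family of finitary relations (the basic
relations), a relation of arity `n` being a set of `n`-tuples `Fin n → A`. -/
structure RelStruct (A : Type) where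
  basic : Set (Σ n : ℕ, Set (Fin n → A))

/-- A CSP instance with variables `V` over domain `A`: a set of constraints,
each consisting of a scope (a tuple of variables) and a constraint relation. -/
structure Instance (A : Type) (V : Type) where
  constraints : Set (Σ n : ℕ, (Fin n → V) × Set (Fin n → A))

/-- `f : V → A` is a solution of the instance `I`. -/
def Instance.Sol {A V : Type} (I : Instance A V) (f : V → A) : Prop :=
  ∀ c ∈ I.constraints, (fun i => f (c.2.1 i)) ∈ c.2.2

def Instance.Satisfiable {A V : Type} (I : Instance A V) : Prop :=
  ∃ f, I.Sol f

/-- `I` is an instance of `CSP(𝔸)`: all its constraint relations are basic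
relations of `𝔸`. -/
def IsCSPInstance {A V : Type} (𝔸 : RelStruct A) (I : Instance A V) : Prop :=
  ∀ c ∈ I.constraints, (⟨c.1, c.2.2⟩ : Σ n : ℕ, Set (Fin n → A)) ∈ 𝔸.basic

/-- An atom of a Datalog rule over the variable set `Fin r`: a predicate
(a relation on `A`) applied to a tuple of variables. -/
structure Atom (A : Type) (r : ℕ) where
  arity : ℕ
  scope : Fin arity → Fin r
  rel : Set (Fin arity → A)

def Atom.holds {A : Type} {r : ℕ} (a : Atom A r) (f : Fin r → A) : Prop :=
  (fun i => f (a.scope i)) ∈ a.rel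

/-- A rule of the `r`-ary maximal symmetric Datalog program `𝒫_𝔸^r` consistent
with `𝔸`: a linear Datalog rule on at most `r` variables, whose head is an IDB
(an arbitrary relation on `A` of arity at most `r`), whose body contains at most
one IDB atom (`idb`) and otherwise non-IDB atoms for basic relations of `𝔸`
of arity at most `r` (`edb`, without repetition), such that the rule is
consistent with `𝔸`, and, if the body contains an IDB atom, its mirror image is
also consistent with `𝔸`. -/
structure Rule (A : Type) (𝔸 : RelStruct A) (r : ℕ) where
  head : Atom A r
  idb : Option (Atom A r)
  edb : List (Atom A r)
  head_arity : head.arity ≤ r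
  idb_arity : ∀ a ∈ idb, a.arity ≤ r
  edb_arity : ∀ a ∈ edb, a.arity ≤ r
  edb_basic : ∀ a ∈ edb, (⟨a.arity, a.rel⟩ : Σ n : ℕ, Set (Fin n → A)) ∈ 𝔸.basic
  nodup : edb.Nodup
  consistent : ∀ f : Fin r → A,
    (∀ a ∈ idb, a.holds f) → (∀ a ∈ edb, a.holds f) → head.holds f
  mirror : ∀ a ∈ idb, ∀ f : Fin r → A,
    head.holds f → (∀ b ∈ edb, b.holds f) → a.holds f

/-- `Derives 𝔸 r I ρ R`: the `r`-ary maximal symmetric Datalog program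
`𝒫_𝔸^r` consistent with `𝔸`, run on the instance `I`, derives `R(ρ)`.
This holds if `(ρ, R)` is a constraint of `I`, or if some rule of `𝒫_𝔸^r`
with head `R(τ)` admits an evaluation `ω` of its variables into `V` with
`ω ∘ τ = ρ`, whose (at most one) IDB body atom is derived and whose non-IDB
body atoms are constraints of `I` under `ω`. -/
inductive Derives {A V : Type} (𝔸 : RelStruct A) (r : ℕ) (I : Instance A V) :
    ∀ {n : ℕ}, (Fin n → V) → Set (Fin n → A) → Prop
  | base {n : ℕ} (ρ : Fin n → V) (R : Set (Fin n → A)) :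
      (⟨n, ρ, R⟩ : Σ n : ℕ, (Fin n → V) × Set (Fin n → A)) ∈ I.constraints →
      Derives 𝔸 r I ρ R
  | step (rule : Rule A 𝔸 r) (ω : Fin r → V) :
      (∀ a ∈ rule.idb, Derives 𝔸 r I (fun i => ω (a.scope i)) a.rel) →
      (∀ a ∈ rule.edb,
        (⟨a.arity, fun i => ω (a.scope i), a.rel⟩ :
          Σ n : ℕ, (Fin n → V) × Set (Fin n → A)) ∈ I.constraints) →
      Derives 𝔸 r I (fun i => ω (rule.head.scope i)) rule.head.rel

/-- `𝒫_𝔸^r(I) ⊢ G`: the program derives a goal predicate, i.e. an empty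
relation of arity at most `r`. -/
def DerivesGoal {A V : Type} (𝔸 : RelStruct A) (r : ℕ) (I : Instance A V) : Prop :=
  ∃ (n : ℕ) (ρ : Fin n → V), n ≤ r ∧ Derives 𝔸 r I ρ (∅ : Set (Fin n → A))

/-- `𝒫_𝔸^r(I) ⊢ J`: the program run on `I` derives every constraint of `J`. -/
def DerivesInstance {A V : Type} (𝔸 : RelStruct A) (r : ℕ) (I J : Instance A V) : Prop :=
  ∀ c ∈ J.constraints, Derives 𝔸 r I c.2.1 c.2.2

/-- An `m`-ary operation `t` preserves the `n`-ary relation `R`. -/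
def PreservesRel {A : Type} {m n : ℕ} (t : (Fin m → A) → A) (R : Set (Fin n → A)) : Prop :=
  ∀ rows : Fin m → Fin n → A, (∀ j, rows j ∈ R) → (fun i => t (fun j => rows j i)) ∈ R

/-- A polymorphism of `𝔸`: an operation preserving all basic relations. -/
def IsPolymorphism {A : Type} {m : ℕ} (𝔸 : RelStruct A) (t : (Fin m → A) → A) : Prop :=
  ∀ R ∈ 𝔸.basic, PreservesRel t R.2

def ternaryOp {A : Type} (p : A → A → A → A) : (Fin 3 → A) → A :=
  fun v => p (v 0) (v 1) (v 2)

/-- A chain of `n` Hagemann–Mitschke terms: idempotent ternary operations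
`p 0, …, p n` with `p 0 x y z = x`, `p k x x y = p (k+1) x y y`, `p n x y z = z`. -/
def IsHMChain {A : Type} (n : ℕ) (p : ℕ → A → A → A → A) : Prop :=
  (∀ k ≤ n, ∀ x : A, p k x x x = x) ∧
  (∀ x y z : A, p 0 x y z = x) ∧
  (∀ x y z : A, p n x y z = z) ∧
  (∀ k < n, ∀ x y : A, p k x x y = p (k + 1) x y y)

def Pres3Set {A : Type} (p : A → A → A → A) (S : Set A) : Prop :=
  ∀ x y z, x ∈ S → y ∈ S → z ∈ S → p x y z ∈ S

def Pres3Rel {A : Type} (p : A → A → A → A) (E : Set (A × A)) : Prop :=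
  ∀ u v w, u ∈ E → v ∈ E → w ∈ E → (p u.1 v.1 w.1, p u.2 v.2 w.2) ∈ E

def PresOpSet {A : Type} {m : ℕ} (t : (Fin m → A) → A) (S : Set A) : Prop :=
  ∀ x : Fin m → A, (∀ j, x j ∈ S) → t x ∈ S

def PresOpRel {A : Type} {m : ℕ} (t : (Fin m → A) → A) (E : Set (A × A)) : Prop :=
  ∀ x y : Fin m → A, (∀ j, (x j, y j) ∈ E) → (t x, t y) ∈ E

/-- A path instance of length `len`: variables `1, …, len`, one unary
constraint `B i` on each variable `i ∈ [1, len]`, and one binary constraint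
`E i` with scope `(i, i+1)` for each `i ∈ [1, len-1]`. -/
structure PathInstance (A : Type) where
  len : ℕ
  B : ℕ → Set A
  E : ℕ → Set (A × A)

/-- A solution of the subinstance of the path instance `I` induced by `[a, b]`. -/
def IsSolutionOn {A : Type} (I : PathInstance A) (a b : ℕ) (s : ℕ → A) : Prop :=
  (∀ i, a ≤ i → i ≤ b → s i ∈ I.B i) ∧
  (∀ i, a ≤ i → i + 1 ≤ b → (s i, s (i + 1)) ∈ I.E i)

def IsSolution {A : Type} (I : PathInstance A) (s : ℕ → A) : Prop :=
  IsSolutionOn I 1 I.len s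

def unaryRel {A : Type} (S : Set A) : Set (Fin 1 → A) := {f | f 0 ∈ S}

def pairRel {A : Type} (E : Set (A × A)) : Set (Fin 2 → A) := {f | (f 0, f 1) ∈ E}

/-- The path instance `I`, presented as a CSP instance on the variable set `ℕ`. -/
def PathInstance.toInstance {A : Type} (I : PathInstance A) : Instance A ℕ where
  constraints :=
    {c | (∃ i, 1 ≤ i ∧ i ≤ I.len ∧
            c = ⟨1, fun _ => i, unaryRel (I.B i)⟩) ∨
         (∃ i, 1 ≤ i ∧ i + 1 ≤ I.len ∧
            c = ⟨2, ![i, i + 1], pairRel (I.E i)⟩)}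

/-- An `n`-braid in the path instance `I`: solutions `s 0, …, s n` and indices
`1 ≤ idx 1 < … < idx n ≤ I.len` with `s k (idx k) = s (k+1) (idx k)` and
`s (k-1) (idx (k+1)) = s k (idx (k+1))` for `k = 1, …, n-1`. -/
def IsBraid {A : Type} (I : PathInstance A) (n : ℕ) (s : ℕ → ℕ → A) (idx : ℕ → ℕ) : Prop :=
  (∀ k ≤ n, IsSolution I (s k)) ∧
  1 ≤ idx 1 ∧ idx n ≤ I.len ∧
  (∀ k, 1 ≤ k → k < n → idx k < idx (k + 1)) ∧
  (∀ k, 1 ≤ k → k + 1 ≤ n →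
    s k (idx k) = s (k + 1) (idx k) ∧ s (k - 1) (idx (k + 1)) = s k (idx (k + 1)))

/-- The binary constraint of `I` with scope `(i, i+1)` is subdirect. -/
def SubdirectAt {A : Type} (I : PathInstance A) (i : ℕ) : Prop :=
  (I.B i).Nonempty ∧ (I.B (i + 1)).Nonempty ∧
  (∀ a ∈ I.B i, ∃ b ∈ I.B (i + 1), (a, b) ∈ I.E i) ∧
  (∀ b ∈ I.B (i + 1), ∃ a ∈ I.B i, (a, b) ∈ I.E i)

/-- The subinstance of `I` induced by `[a, b]` is subdirect. -/
def SubdirectOn {A : Type} (I : PathInstance A) (a b : ℕ) : Prop :=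
  ∀ i, a ≤ i → i + 1 ≤ b → SubdirectAt I i

def Subdirect {A : Type} (I : PathInstance A) : Prop := SubdirectOn I 1 I.len

/-- The sets `C_i`: `C 1 = B 1` and
`C (i+1) = {b ∈ B (i+1) | ∃ c ∈ C i, (c, b) ∈ E i}`. -/
def reachSet {A : Type} (I : PathInstance A) : ℕ → Set A
  | 0 => ∅
  | 1 => I.B 1
  | (i + 2) => {b ∈ I.B (i + 2) | ∃ c ∈ reachSet I (i + 1), (c, b) ∈ I.E (i + 1)}

/-- `B_{i,i+1}` contains a backward edge: an edge `(b, c) ∈ E i` with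
`b ∈ B i \ C i` and `c ∈ C (i+1)`. -/
def BackwardAt {A : Type} (I : PathInstance A) (i : ℕ) : Prop :=
  1 ≤ i ∧ i + 1 ≤ I.len ∧
  ∃ b c, (b, c) ∈ I.E i ∧ b ∈ I.B i ∧ b ∉ reachSet I i ∧ c ∈ reachSet I (i + 1)

/-- Adjacency in the graph `Conn(I_{[lo,hi]})`: its vertices are pairs `(i, a)`
with `a ∈ B i`, `lo ≤ i ≤ hi`, and `(i, a)` is adjacent to `(i+1, b)` whenever
`(a, b) ∈ E i`. -/
def connAdj {A : Type} (I : PathInstance A) (lo hi : ℕ) (p q : ℕ × A) : Prop :=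
  lo ≤ p.1 ∧ p.1 + 1 ≤ hi ∧ q.1 = p.1 + 1 ∧
  p.2 ∈ I.B p.1 ∧ q.2 ∈ I.B q.1 ∧ (p.2, q.2) ∈ I.E p.1

/-- `λ_{I,lo,hi}`: the pairs `(a, b) ∈ B lo × B hi` joined by an undirected path
in `Conn(I_{[lo,hi]})`. -/
def lamRel {A : Type} (I : PathInstance A) (lo hi : ℕ) : Set (A × A) :=
  {ab | ab.1 ∈ I.B lo ∧ ab.2 ∈ I.B hi ∧
    Relation.ReflTransGen (fun p q => connAdj I lo hi p q ∨ connAdj I lo hi q p)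
      (lo, ab.1) (hi, ab.2)}

open Classical in
/-- The variable set `U` of the instance `I_λ`: the variables `1`, `len`, and
`i, i+1` for every index `i` such that `B_{i,i+1}` has a backward edge. -/
noncomputable def lamVars {A : Type} (I : PathInstance A) : Finset ℕ :=
  (Finset.Icc 1 I.len).filter
    (fun v => v = 1 ∨ v = I.len ∨ BackwardAt I v ∨ (2 ≤ v ∧ BackwardAt I (v - 1)))

/-- The `t`-th smallest element of `U` (`1`-indexed). -/
noncomputable def lamEnum {A : Type} (I : PathInstance A) (t : ℕ) : ℕ :=
  ((lamVars I).sort (· ≤ ·)).getD (t - 1) 0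

/-- The instance `I_λ`, presented as a path instance whose `t`-th variable is
the `t`-th smallest element of `U`: it consists of the subinstance of `I`
induced by `U`, where each gap between consecutive elements `u < w` of `U` with
`w > u + 1` is filled by the binary constraint `λ_{I,u,w}`. -/
noncomputable def lamInst {A : Type} (I : PathInstance A) : PathInstance A where
  len := (lamVars I).card
  B := fun t => I.B (lamEnum I t)
  E := fun t =>
    if lamEnum I (t + 1) = lamEnum I t + 1 then I.E (lamEnum I t)
    else lamRel I (lamEnum I t) (lamEnum I (t + 1))

/-- Unpacking an `m`-tuple of elements of `V^k` into an `m*k`-tuple of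
elements of `V`. -/
def unpackTuple {X : Type} {m k : ℕ} (σ : Fin m → Fin k → X) : Fin (m * k) → X :=
  fun t => σ t.divNat t.modNat

/-- Unpacking an `m`-ary relation on `A^k` into an `m*k`-ary relation on `A`. -/
def unpackRel {A : Type} {m k : ℕ} (U : Set (Fin m → Fin k → A)) :
    Set (Fin (m * k) → A) :=
  {t | ∃ u ∈ U, ∀ i : Fin (m * k), t i = u i.divNat i.modNat}

/-- The instance `I` has pathwidth at most `p`. -/
def PathwidthLE {A V : Type} (I : Instance A V) (p : ℕ) : Prop :=
  ∃ (m : ℕ) (U : Fin m → Set V),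
    (∀ v : V, ∃ i, v ∈ U i) ∧
    (∀ i, (U i).Finite ∧ (U i).ncard ≤ p + 1) ∧
    (∀ i j q : Fin m, i ≤ q → q ≤ j → ∀ v, v ∈ U i → v ∈ U j → v ∈ U q) ∧
    (∀ c ∈ I.constraints, ∃ i, Set.range c.2.1 ⊆ U i)

/-- `𝔸` has pathwidth duality `p`: for every unsatisfiable instance `I` of
`CSP(𝔸)` there is an unsatisfiable instance `J` of `CSP(𝔸)` of pathwidth at
most `p` such that identifying some variables of `J` (along `h`) yields a
subinstance of `I`. -/
def HasPathwidthDuality {A : Type} (𝔸 : RelStruct A) (p : ℕ) : Prop :=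
  ∀ (V : Type) (I : Instance A V), IsCSPInstance 𝔸 I → ¬I.Satisfiable →
    ∃ (W : Type) (J : Instance A W) (h : W → V),
      IsCSPInstance 𝔸 J ∧ ¬J.Satisfiable ∧ PathwidthLE J p ∧
      ∀ c ∈ J.constraints,
        (⟨c.1, fun i => h (c.2.1 i), c.2.2⟩ :
          Σ n : ℕ, (Fin n → V) × Set (Fin n → A)) ∈ I.constraints

/-- The `k`-th bubble power `𝔸^(k)` of `𝔸`: the relational structure on `A^k`
whose basic relations are all unary relations definable as conjunctions of
basic relations of `𝔸` (with identification of variables and dummy variables,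
but no existential quantification), and all binary relations
`E_ℐ = {(a, b) | ∀ (i,j) ∈ ℐ, a i = b j}` for `ℐ ⊆ [k]²`. -/
def bubblePower {A : Type} (𝔸 : RelStruct A) (k : ℕ) : RelStruct (Fin k → A) where
  basic :=
    {r | (∃ L : Set (Σ n : ℕ, (Fin n → Fin k) × Set (Fin n → A)),
            (∀ c ∈ L, (⟨c.1, c.2.2⟩ : Σ n : ℕ, Set (Fin n → A)) ∈ 𝔸.basic) ∧
            r = ⟨1, {f : Fin 1 → (Fin k → A) |
                      ∀ c ∈ L, (fun i => f 0 (c.2.1 i)) ∈ c.2.2}⟩) ∨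
         (∃ Idx : Set (Fin k × Fin k),
            r = ⟨2, {f : Fin 2 → (Fin k → A) | ∀ q ∈ Idx, f 0 q.1 = f 1 q.2}⟩)}


theorem unpack_mem {A : Type} {m k : ℕ} (τ : Fin m → Fin k → A) (U : Set (Fin m → Fin k → A)) :
    unpackTuple τ ∈ unpackRel U ↔ τ ∈ U := by
  constructor
  · rintro ⟨u, hu, h⟩
    have : τ = u := by
      funext a b
      have := h (finProdFinEquiv (a, b))
      have e : finProdFinEquiv.symm (finProdFinEquiv (a, b)) = (a, b) :=
        Equiv.symm_apply_apply _ _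
      have e1 : (finProdFinEquiv (a, b)).divNat = a := congrArg Prod.fst e
      have e2 : (finProdFinEquiv (a, b)).modNat = b := congrArg Prod.snd e
      simpa only [unpackTuple, e1, e2] using this
    rwa [this]
  · intro h
    exact ⟨τ, h, fun _ => rfl⟩

theorem exists_inj {V : Type} {r : ℕ} (hr : 0 < r) (P : Set V) (hP : P.Finite)
    (hPr : P.ncard ≤ r) : ∃ c : V → Fin r, Set.InjOn c P := by
  have : Nonempty (Fin r) := ⟨⟨0, hr⟩⟩
  obtain ⟨f, _, hf⟩ := hP.exists_injOn_of_encard_le (t := (Set.univ : Set (Fin r))) (by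
    rw [← hP.cast_ncard_eq]
    simpa using hPr)
  exact ⟨f, hf⟩

theorem derives_sound {A V : Type} {𝔸 : RelStruct A} {r : ℕ} {I : Instance A V} {g : V → A}
    (hg : I.Sol g) {n : ℕ} {ρ : Fin n → V} {R : Set (Fin n → A)} (h : Derives 𝔸 r I ρ R) :
    (fun i => g (ρ i)) ∈ R := by
  induction h with
  | base ρ R hc => exact hg _ hc
  | step rule ω _ hedb ih =>
    exact rule.consistent (fun i => g (ω i)) (fun a ha => ih a ha) (fun a ha => hg _ (hedb a ha))

/-- A scoped relation with scope pushed to rule variables. -/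
def mkAtom {A V : Type} {r : ℕ} (c : V → Fin r) (x : Σ n : ℕ, (Fin n → V) × Set (Fin n → A)) :
    Atom A r := ⟨x.1, fun i => c (x.2.1 i), x.2.2⟩

/-- Semantic form of a derivation step. -/
theorem derive_step {A V : Type} [Nonempty V] {𝔸 : RelStruct A} {r : ℕ} (hr : 0 < r)
    {I : Instance A V} (hI : IsCSPInstance 𝔸 I) (P : Set V) (hP : P.Finite) (hPr : P.ncard ≤ r)
    (C : Set (Σ n : ℕ, (Fin n → V) × Set (Fin n → A))) (hC : C.Finite)
    (hCI : C ⊆ I.constraints) (hCr : ∀ c ∈ C, c.1 ≤ r) (hCP : ∀ c ∈ C, ∀ i, c.2.1 i ∈ P)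
    (o : Option (Σ n : ℕ, (Fin n → V) × Set (Fin n → A)))
    (hor : ∀ a ∈ o, a.1 ≤ r) (hoP : ∀ a ∈ o, ∀ i, a.2.1 i ∈ P)
    (ho : ∀ a ∈ o, Derives 𝔸 r I a.2.1 a.2.2)
    {n : ℕ} (ρ : Fin n → V) (R : Set (Fin n → A)) (hn : n ≤ r) (hρ : ∀ i, ρ i ∈ P)
    (cons : ∀ g : V → A, (∀ c ∈ C, (fun i => g (c.2.1 i)) ∈ c.2.2) →
      (∀ a ∈ o, (fun i => g (a.2.1 i)) ∈ a.2.2) → (fun i => g (ρ i)) ∈ R)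
    (mirr : ∀ g : V → A, (∀ c ∈ C, (fun i => g (c.2.1 i)) ∈ c.2.2) →
      (fun i => g (ρ i)) ∈ R → (∀ a ∈ o, (fun i => g (a.2.1 i)) ∈ a.2.2)) :
    Derives 𝔸 r I ρ R := by
  classical
  have : Nonempty (Fin r) := ⟨⟨0, hr⟩⟩
  obtain ⟨c, hc⟩ : ∃ c : V → Fin r, Set.InjOn c P := by
    exact exists_inj hr P hP hPr
  let ω : Fin r → V := Function.invFunOn c P
  have hω : ∀ v ∈ P, ω (c v) = v := fun v hv => hc.leftInvOn_invFunOn hv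
  have hfin : (mkAtom c '' C).Finite := hC.image _
  let rule : Rule A 𝔸 r :=
    { head := mkAtom c ⟨n, ρ, R⟩
      idb := o.map (mkAtom c)
      edb := hfin.toFinset.toList
      head_arity := hn
      idb_arity := by
        intro a ha
        obtain ⟨b, hb, rfl⟩ := Option.mem_map.1 ha
        exact hor b hb
      edb_arity := by
        intro a ha
        simp only [Finset.mem_toList, Set.Finite.mem_toFinset] at ha
        obtain ⟨b, hb, rfl⟩ := ha
        exact hCr b hb
      edb_basic := by
        intro a ha
        simp only [Finset.mem_toList, Set.Finite.mem_toFinset] at ha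
        obtain ⟨b, hb, rfl⟩ := ha
        exact hI b (hCI hb)
      nodup := Finset.nodup_toList _
      consistent := by
        intro f h1 h2
        refine cons (fun v => f (c v)) ?_ ?_
        · intro b hb
          exact h2 (mkAtom c b) (by
            rw [Finset.mem_toList, Set.Finite.mem_toFinset]
            exact ⟨b, hb, rfl⟩)
        · intro a ha
          exact h1 (mkAtom c a) (Option.mem_map.2 ⟨a, ha, rfl⟩)
      mirror := by
        intro a ha f h1 h2
        obtain ⟨b, hb, rfl⟩ := Option.mem_map.1 ha
        refine mirr (fun v => f (c v)) ?_ h1 b hb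
        intro b hb
        exact h2 (mkAtom c b) (by
            rw [Finset.mem_toList, Set.Finite.mem_toFinset]
            exact ⟨b, hb, rfl⟩) }
  have key := Derives.step (I := I) rule ω (by
    intro a ha
    obtain ⟨b, hb, rfl⟩ := Option.mem_map.1 ha
    have e : (fun i => ω ((mkAtom c b).scope i)) = b.2.1 := by
      funext i
      exact hω _ (hoP b hb i)
    rw [e]
    exact ho b hb) (by
    intro a ha
    have ha' : a ∈ hfin.toFinset.toList := ha
    simp only [Finset.mem_toList, Set.Finite.mem_toFinset] at ha'
    obtain ⟨b, hb, rfl⟩ := ha'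
    have e : (fun i => ω ((mkAtom c b).scope i)) = b.2.1 := by
      funext i
      exact hω _ (hCP b hb i)
    rw [e]
    exact hCI hb)
  have e : (fun i => ω (rule.head.scope i)) = ρ := by
    funext i
    exact hω _ (hρ i)
  rw [e] at key
  exact key

/-- Index set of constraints of `I` visible on the tuple `y`. -/
def visible {A V : Type} {k : ℕ} (I : Instance A V) (y : Fin k → V) :
    Set (Σ n : ℕ, (Fin n → Fin k) × Set (Fin n → A)) :=
  {c | c.1 ≤ k ∧ (⟨c.1, fun i => y (c.2.1 i), c.2.2⟩ :
    Σ n : ℕ, (Fin n → V) × Set (Fin n → A)) ∈ I.constraints}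

/-- The path instance of the bubble power given by a sequence of `k`-tuples of variables. -/
def bubblePath {A V : Type} {k : ℕ} (I : Instance A V) (y : ℕ → Fin k → V) (m : ℕ) :
    PathInstance (Fin k → A) where
  len := m
  B := fun t => {f | ∀ c ∈ visible I (y t), (fun i => f (c.2.1 i)) ∈ c.2.2}
  E := fun t => {p | ∀ i j, y t i = y (t + 1) j → p.1 i = p.2 j}

theorem bubblePath_csp {A V : Type} {k : ℕ} {𝔸 : RelStruct A} {I : Instance A V}
    (hI : IsCSPInstance 𝔸 I) (y : ℕ → Fin k → V) (m : ℕ) :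
    IsCSPInstance (bubblePower 𝔸 k) (bubblePath I y m).toInstance := by
  rintro c (⟨t, _, _, rfl⟩ | ⟨t, _, _, rfl⟩)
  · left
    exact ⟨visible I (y t), fun c hc => hI _ hc.2, rfl⟩
  · right
    refine ⟨{q | y t q.1 = y (t + 1) q.2}, ?_⟩
    congr 1
    ext f
    simp only [pairRel, bubblePath, Set.mem_ofPred_eq, Prod.forall]

theorem bubblePath_holds {A V : Type} {k : ℕ} {I : Instance A V} (y : ℕ → Fin k → V) (m : ℕ)
    (g : V → A) (c : Σ n : ℕ, (Fin n → ℕ) × Set (Fin n → Fin k → A))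
    (hc : c ∈ (bubblePath I y m).toInstance.constraints)
    (hg : ∀ d ∈ I.constraints, d.1 ≤ k →
      (∀ i, ∃ u j, d.2.1 i = y (c.2.1 u) j) → (fun i => g (d.2.1 i)) ∈ d.2.2) :
    (fun u i => g (y (c.2.1 u) i)) ∈ c.2.2 := by
  rcases hc with ⟨t, _, _, rfl⟩ | ⟨t, _, _, rfl⟩
  · intro d hd
    exact hg _ hd.2 hd.1 (fun i => ⟨0, d.2.1 i, rfl⟩)
  · intro i j hij
    exact congrArg g hij

theorem finite_cons {A V : Type} [Finite A] (k : ℕ) (P : Set V) (hP : P.Finite) :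
    {d : Σ n : ℕ, (Fin n → V) × Set (Fin n → A) | d.1 ≤ k ∧ ∀ i, d.2.1 i ∈ P}.Finite := by
  have : (⋃ n ∈ Set.Iic k, (Sigma.mk n : _ → Σ n : ℕ, (Fin n → V) × Set (Fin n → A)) ''
      ((Set.univ.pi fun _ => P) ×ˢ (Set.univ : Set (Set (Fin n → A))))).Finite := by
    refine (Set.finite_Iic k).biUnion fun n _ => Set.Finite.image _ ?_
    exact (Set.Finite.pi fun _ => hP).prod Set.finite_univ
  refine this.subset ?_
  rintro ⟨n, ρ, R⟩ ⟨h1, h2⟩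
  simp only [Set.mem_iUnion]
  exact ⟨n, h1, ⟨ρ, R⟩, ⟨fun i _ => h2 i, trivial⟩, rfl⟩

theorem tuples_card {V : Type} {k q : ℕ} (z : Fin q → Fin k → V) :
    {v | ∃ u j, v = z u j}.Finite ∧ {v | ∃ u j, v = z u j}.ncard ≤ q * k := by
  have e : {v | ∃ u j, v = z u j} = (fun p : Fin q × Fin k => z p.1 p.2) '' Set.univ := by
    ext v
    simp [eq_comm]
  rw [e]
  refine ⟨Set.finite_univ.image _, (Set.ncard_image_le Set.finite_univ).trans ?_⟩
  simp [Set.ncard_univ]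

theorem simulate {A V : Type} [Finite A] [Nonempty V] {𝔸 : RelStruct A} {k s : ℕ} (hk : 1 ≤ k)
    {I : Instance A V} (hI : IsCSPInstance 𝔸 I) (y : ℕ → Fin k → V) (m : ℕ)
    {n : ℕ} {ρ : Fin n → ℕ} {R : Set (Fin n → Fin k → A)}
    (h : Derives (bubblePower 𝔸 k) s (bubblePath I y m).toInstance ρ R) :
    Derives 𝔸 (k * (s + 2)) I (unpackTuple fun u => y (ρ u)) (unpackRel R) := by
  have hr : 0 < k * (s + 2) := by positivity
  have hle : ∀ {n}, n ≤ s + 2 → n * k ≤ k * (s + 2) := fun h => by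
    rw [mul_comm]; exact Nat.mul_le_mul_left _ h
  have hkr : k ≤ k * (s + 2) := Nat.le_mul_of_pos_right _ (by omega)
  induction h with
  | @base n ρ R hc =>
    have hn : n ≤ s + 2 := by
      rcases hc with ⟨t, _, _, h⟩ | ⟨t, _, _, h⟩
      · have := congrArg Sigma.fst h
        simp only at this
        omega
      · have := congrArg Sigma.fst h
        simp only at this
        omega
    obtain ⟨hPf, hPc⟩ := tuples_card (fun u => y (ρ u))
    refine derive_step hr hI {v | ∃ u j, v = y (ρ u) j} hPf (hPc.trans (hle hn))
      {d | d ∈ I.constraints ∧ d.1 ≤ k ∧ ∀ i, d.2.1 i ∈ {v | ∃ u j, v = y (ρ u) j}}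
      ((finite_cons k _ hPf).subset fun d hd => hd.2) (fun d hd => hd.1)
      (fun d hd => hd.2.1.trans hkr) (fun d hd => hd.2.2) none (by simp) (by simp) (by simp)
      _ _ (hle hn) (fun i => ⟨_, _, rfl⟩) ?_ (by simp)
    intro g hg _
    exact (unpack_mem (fun u i => g (y (ρ u) i)) R).2
      (bubblePath_holds y m g _ hc fun d h1 h2 h3 => hg d ⟨h1, h2, h3⟩)
  | step rule ω hidb hedb ih =>
    obtain ⟨hPf, hPc⟩ := tuples_card (fun u => y (ω u))
    have hedbh : ∀ g : V → A, (∀ d ∈ {d | d ∈ I.constraints ∧ d.1 ≤ k ∧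
          ∀ i, d.2.1 i ∈ {v | ∃ u j, v = y (ω u) j}}, (fun i => g (d.2.1 i)) ∈ d.2.2) →
        ∀ a ∈ rule.edb, a.holds (fun u i => g (y (ω u) i)) := by
      intro g hg a ha
      refine bubblePath_holds y m g _ (hedb a ha) fun d h1 h2 h3 => hg d ⟨h1, h2, fun i => ?_⟩
      obtain ⟨u, j, e⟩ := h3 i
      exact ⟨_, j, e⟩
    refine derive_step hr hI {v | ∃ u j, v = y (ω u) j} hPf (hPc.trans (hle (by omega)))
      {d | d ∈ I.constraints ∧ d.1 ≤ k ∧ ∀ i, d.2.1 i ∈ {v | ∃ u j, v = y (ω u) j}}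
      ((finite_cons k _ hPf).subset fun d hd => hd.2) (fun d hd => hd.1)
      (fun d hd => hd.2.1.trans hkr) (fun d hd => hd.2.2)
      (rule.idb.map fun a => ⟨a.arity * k, unpackTuple fun u => y (ω (a.scope u)),
        unpackRel a.rel⟩) ?_ ?_ ?_
      _ _ (hle (rule.head_arity.trans (by omega))) (fun i => ⟨_, _, rfl⟩) ?_ ?_
    · intro a ha
      obtain ⟨b, hb, rfl⟩ := Option.mem_map.1 ha
      exact hle ((rule.idb_arity b hb).trans (by omega))
    · intro a ha
      obtain ⟨b, hb, rfl⟩ := Option.mem_map.1 ha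
      exact fun i => ⟨_, _, rfl⟩
    · intro a ha
      obtain ⟨b, hb, rfl⟩ := Option.mem_map.1 ha
      exact ih b hb
    · intro g hg hi
      refine (unpack_mem (fun u i => g (y (ω (rule.head.scope u)) i)) _).2 ?_
      refine rule.consistent (fun u i => g (y (ω u) i)) (fun a ha => ?_) (hedbh g hg)
      exact (unpack_mem (fun u i => g (y (ω (a.scope u)) i)) _).1
        (hi _ (Option.mem_map.2 ⟨a, ha, rfl⟩))
    · intro g hg hh a ha
      obtain ⟨b, hb, rfl⟩ := Option.mem_map.1 ha
      refine (unpack_mem (fun u i => g (y (ω (b.scope u)) i)) _).2 ?_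
      exact rule.mirror b hb (fun u i => g (y (ω u) i))
        ((unpack_mem (fun u i => g (y (ω (rule.head.scope u)) i)) _).1 hh) (hedbh g hg)

/-- The blow-up of an instance: every variable gets infinitely many copies and all scopes are
required to be injective. -/
def blowUp {A V : Type} (I : Instance A V) : Instance A (V × ℕ) where
  constraints := {c | Function.Injective c.2.1 ∧ (⟨c.1, fun i => (c.2.1 i).1, c.2.2⟩ :
    Σ n : ℕ, (Fin n → V) × Set (Fin n → A)) ∈ I.constraints}

theorem blowUp_unsat {A V : Type} [Finite A] {I : Instance A V} (h : ¬I.Satisfiable) :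
    ¬(blowUp I).Satisfiable := by
  rintro ⟨f, hf⟩
  apply h
  have H : ∀ v, ∃ a, ∃ e : ℕ → ℕ, Function.Injective e ∧ ∀ i, f (v, e i) = a := by
    intro v
    obtain ⟨a, ha⟩ := Finite.exists_infinite_fiber (fun j : ℕ => f (v, j))
    obtain ⟨e⟩ : Nonempty (ℕ ↪ ((fun j : ℕ => f (v, j)) ⁻¹' {a} : Set ℕ)) :=
      ⟨Infinite.natEmbedding _⟩
    exact ⟨a, fun i => e i, fun i j hij => e.injective (Subtype.ext hij), fun i => (e i).2⟩
  choose col e he hcol using H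
  refine ⟨col, ?_⟩
  rintro ⟨n, ρ, R⟩ hc
  have := hf ⟨n, fun i => (ρ i, e (ρ i) i), R⟩ ⟨?_, hc⟩
  · simpa only [hcol] using this
  · intro i j hij
    simp only [Prod.mk.injEq] at hij
    obtain ⟨h1, h2⟩ := hij
    rw [h1] at h2
    exact Fin.ext (he _ h2)

/-- Reduction to path instances. -/
theorem exists_path {A V : Type} [Finite A] [Nonempty V] {𝔸 : RelStruct A} {k : ℕ} (hk : 1 ≤ k)
    (hdual : HasPathwidthDuality 𝔸 (k - 1)) {I : Instance A V} (hI : IsCSPInstance 𝔸 I)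
    (h : ¬I.Satisfiable) :
    ∃ (y : ℕ → Fin k → V) (m : ℕ), ¬∃ f : ℕ → Fin k → A, IsSolution (bubblePath I y m) f := by
  classical
  obtain ⟨W, J, h0, hJ, hJu, ⟨m, U, hcov, hcard, hconn, hscope⟩, hsub⟩ :=
    hdual (V × ℕ) (blowUp I) (fun c hc => hI _ hc.2) (blowUp_unsat h)
  have : Nonempty (Fin k) := ⟨⟨0, hk⟩⟩
  have hpos : ∀ t : Fin m, ∃ p : W → Fin k, Set.InjOn p (U t) := by
    intro t
    exact exists_inj hk _ (hcard t).1 (by have := (hcard t).2; omega)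
  choose pos hinj using hpos
  obtain ⟨v0⟩ := ‹Nonempty V›
  have hy : ∃ y : ℕ → Fin k → V, ∀ (t : Fin m) (w : W), w ∈ U t →
      y (t.val + 1) (pos t w) = (h0 w).1 := by
    refine ⟨fun n i => if H : ∃ (t : Fin m) (w : W), t.val + 1 = n ∧ w ∈ U t ∧ pos t w = i
      then (h0 H.choose_spec.choose).1 else v0, ?_⟩
    intro t w hw
    have H : ∃ (t' : Fin m) (w' : W), t'.val + 1 = t.val + 1 ∧ w' ∈ U t' ∧ pos t' w' = pos t w :=
      ⟨t, w, rfl, hw, rfl⟩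
    have e := H.choose_spec.choose_spec
    simp only [dif_pos H]
    have e1 : H.choose = t := Fin.ext (by have := e.1; omega)
    have e2 := e.2
    generalize H.choose_spec.choose = w' at *
    rw [e1] at e2
    rw [hinj t e2.1 hw e2.2]
  obtain ⟨y, hy⟩ := hy
  refine ⟨y, m, ?_⟩
  rintro ⟨g, hgB, hgE⟩
  apply hJu
  have walk : ∀ (w : W) (d : ℕ) (t t' : Fin m), t'.val = t.val + d → w ∈ U t → w ∈ U t' →
      g (t.val + 1) (pos t w) = g (t'.val + 1) (pos t' w) := by
    intro w d
    induction d with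
    | zero =>
      intro t t' e _ _
      have : t' = t := Fin.ext e
      rw [this]
    | succ d ih =>
      intro t t' e ht ht'
      have hlt : t.val + d < m := by have := t'.2; omega
      let q : Fin m := ⟨t.val + d, hlt⟩
      have hq : w ∈ U q := hconn t t' q (by simp [q, Fin.le_def]) (by simp [q, Fin.le_def]; omega)
        w ht ht'
      rw [ih t q rfl ht hq]
      have e2 : t'.val = q.val + 1 := by simp [q]; omega
      have := hgE (q.val + 1) (by omega) (by have := t'.2; simp only [bubblePath]; omega)
        (pos q w) (pos t' w) (by rw [hy q w hq, ← e2, hy t' w ht'])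
      simpa only [← e2] using this
  have walk' : ∀ (w : W) (t t' : Fin m), w ∈ U t → w ∈ U t' →
      g (t.val + 1) (pos t w) = g (t'.val + 1) (pos t' w) := by
    intro w t t' ht ht'
    rcases le_total t.val t'.val with hl | hl
    · exact walk w (t'.val - t.val) t t' (by omega) ht ht'
    · exact (walk w (t.val - t'.val) t' t (by omega) ht' ht).symm
  choose b hb using hcov
  refine ⟨fun w => g ((b w).val + 1) (pos (b w) w), ?_⟩
  rintro ⟨n, ρ, R⟩ hc
  obtain ⟨t, ht⟩ := hscope _ hc
  have ht' : ∀ i, ρ i ∈ U t := fun i => ht ⟨i, rfl⟩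
  have hs := hsub _ hc
  have hρ : Function.Injective ρ := fun i j hij => hs.1 (congrArg h0 hij)
  have hn : n ≤ k := by
    have h1 : Function.Injective (fun i => pos t (ρ i)) := fun i j hij =>
      hρ (hinj t (ht' i) (ht' j) hij)
    simpa using Fintype.card_le_of_injective _ h1
  have := hgB (t.val + 1) (by omega) t.2 ⟨n, fun i => pos t (ρ i), R⟩ ⟨hn, by
    have e : (fun i => y (t.val + 1) (pos t (ρ i))) = fun i => (h0 (ρ i)).1 :=
      funext fun i => hy t _ (ht' i)
    simp only [e]
    exact hs.2⟩
  have e : (fun i => g ((b (ρ i)).val + 1) (pos (b (ρ i)) (ρ i))) =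
      fun i => g (t.val + 1) (pos t (ρ i)) :=
    funext fun i => walk' _ _ _ (hb _) (ht' i)
  simp only [e]
  exact this

/-- from path instances of the bubble power to all
instances. Let `𝔸` be a finite relational structure with pathwidth duality
`k - 1` and let `s` be such that `𝒫_{𝔸^(k)}^s(I) ⊢ G` for every unsatisfiable
path instance `I` of `CSP(𝔸^(k))`. Then `𝒫_𝔸^{k(s+2)}` decides `CSP(𝔸)`. -/
theorem statement16 {A : Type} [Finite A] (𝔸 : RelStruct A)
    (hfin : 𝔸.basic.Finite)
    (k : ℕ) (hk : 1 ≤ k)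
    (hdual : HasPathwidthDuality 𝔸 (k - 1))
    (s : ℕ)
    (hs : ∀ K : PathInstance (Fin k → A),
      IsCSPInstance (bubblePower 𝔸 k) K.toInstance →
      (¬∃ f : ℕ → Fin k → A, IsSolution K f) →
      DerivesGoal (bubblePower 𝔸 k) s K.toInstance) :
    ∀ (V : Type) (I : Instance A V), IsCSPInstance 𝔸 I →
      (DerivesGoal 𝔸 (k * (s + 2)) I ↔ ¬I.Satisfiable) := by
  intro V I hI
  constructor
  · rintro ⟨n, ρ, _, h⟩ ⟨g, hg⟩
    exact derives_sound hg h
  · intro h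
    rcases isEmpty_or_nonempty V with hV | hV
    · by_contra hG
      apply h
      refine ⟨fun v => hV.elim v, ?_⟩
      rintro ⟨n, ρ, R⟩ hc
      by_contra hR
      have hn : n = 0 := by
        by_contra hn
        exact hV.elim (ρ ⟨0, Nat.pos_of_ne_zero hn⟩)
      subst hn
      have hR0 : R = ∅ := by
        ext f
        simp only [Set.mem_empty_iff_false, iff_false]
        intro hf
        exact hR (by convert hf)
      subst hR0
      exact hG ⟨0, ρ, Nat.zero_le _, Derives.base ρ _ hc⟩
    · obtain ⟨y, m, hy⟩ := exists_path hk hdual hI h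
      obtain ⟨n, ρ, hn, hd⟩ := hs (bubblePath I y m) (bubblePath_csp hI y m) hy
      have := simulate hk hI y m hd
      have e : unpackRel (∅ : Set (Fin n → Fin k → A)) = ∅ := by
        ext f
        simp [unpackRel]
      rw [e] at this
      refine ⟨n * k, _, ?_, this⟩
      rw [mul_comm]
      exact Nat.mul_le_mul_left _ (by omega)

end CSPPaper
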